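/- arXiv:2409.02422 — 2 statements merged into one kernel-verified Lean document; each statement's English description precedes it below -/
import Mathlib

section
/- Let λ be a gl(m|n)-weight and define f(i) = Σ_{j∈I, j<i} (−1)^{|j|} for i∈I. If a + f(i) − (−1)^{|i|}λ_i is not a nonnegative integer for every i ∈ I, then the U(gl(m+1|n))-module F_a ⊗ L(λ) is a highest weight module, generated by the highest weight vector t_0^a ⊗ v_λ. -/
set_option maxHeartbeats 1000000
set_option synthInstance.maxHeartbeats 400000

noncomputable section
open scoped TensorProduct

/-- The index set `I = {1,…,m,1̄,…,n̄}` of `gl(m|n)`; `Sum.inl` are the even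
(unbarred) indices, `Sum.inr` the odd (barred) ones.  The index set
`Î = {0} ∪ I` of `gl(m+1|n)` is realized as `Ind (m+1) n`, with `0 = Sum.inl 0`. -/
abbrev Ind (m n : ℕ) := Fin m ⊕ Fin n

/-- Parity of an index, as `0` or `1`. -/
def pI {m n : ℕ} : Ind m n → ℕ := Sum.elim (fun _ => 0) (fun _ => 1)

/-- The total order `1 < ⋯ < m < 1̄ < ⋯ < n̄` on `I` (and, with `m+1` in place of `m`,
the order `0 < 1 < ⋯ < m < 1̄ < ⋯ < n̄` on `Î`). -/
def iltI {m n : ℕ} : Ind m n → Ind m n → Prop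
  | Sum.inl a, Sum.inl b => a < b
  | Sum.inl _, Sum.inr _ => True
  | Sum.inr _, Sum.inl _ => False
  | Sum.inr a, Sum.inr b => a < b

/-- The distinguished index `0` of `Î`. -/
def z0 {m n : ℕ} : Ind (m+1) n := Sum.inl 0

/-- The inclusion `I ↪ Î`. -/
def emb {m n : ℕ} : Ind m n → Ind (m+1) n := Sum.map Fin.succ id

lemma emb_injective {m n : ℕ} : Function.Injective (emb (m := m) (n := n)) := by
  intro a b h
  cases a <;> cases b <;> simp [emb, Fin.succ_inj] at h <;> simp [h]

lemma emb_ne_z0 {m n : ℕ} (a : Ind m n) : emb a ≠ z0 := by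
  cases a <;> simp [emb, z0, Fin.succ_ne_zero]

/-- Builds a linear map out of a space with basis `α` from a function on basis vectors. -/
def mkOp {α M : Type} [AddCommGroup M] [Module ℂ M] (g : α → M) : (α →₀ ℂ) →ₗ[ℂ] M :=
  Finsupp.lsum ℂ fun x => LinearMap.toSpanSingleton ℂ M (g x)

/-- Number of odd variables occurring before position `i`. -/
def cntB {n : ℕ} (b : Fin n → Bool) (i : Fin n) : ℕ :=
  (Finset.univ.filter fun j => j < i ∧ b j = true).card

/-- Number of odd variables occurring. -/
def cntA {n : ℕ} (b : Fin n → Bool) : ℕ := (Finset.univ.filter fun j => b j = true).card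


/-- The defining (super-)commutation relations of `gl`:
`e_ij e_kl − (−1)^{(|i|+|j|)(|k|+|l|)} e_kl e_ij = δ_jk e_il − (−1)^{(|i|+|j|)(|k|+|l|)} δ_li e_kj`. -/
inductive glRel (ι : Type) (p : ι → ℕ) [DecidableEq ι] :
    FreeAlgebra ℂ (ι × ι) → FreeAlgebra ℂ (ι × ι) → Prop
  | basic (i j k l : ι) : glRel ι p
      (FreeAlgebra.ι ℂ (i, j) * FreeAlgebra.ι ℂ (k, l)
        - ((-1 : ℂ) ^ ((p i + p j) * (p k + p l))) •
            (FreeAlgebra.ι ℂ (k, l) * FreeAlgebra.ι ℂ (i, j)))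
      ((if j = k then FreeAlgebra.ι ℂ (i, l) else 0)
        - ((-1 : ℂ) ^ ((p i + p j) * (p k + p l))) •
            (if l = i then FreeAlgebra.ι ℂ (k, j) else 0))

/-- The universal enveloping superalgebra of the general linear Lie superalgebra with
index set `ι` and parity `p`, presented by generators `e_ij` and the super-commutator
relations. -/
abbrev UEA (ι : Type) (p : ι → ℕ) [DecidableEq ι] : Type := RingQuot (glRel ι p)

/-- The generator `e_ij` of `UEA ι p`. -/
def gen {ι : Type} (p : ι → ℕ) [DecidableEq ι] (i j : ι) : UEA ι p :=
  RingQuot.mkAlgHom ℂ (glRel ι p) (FreeAlgebra.ι ℂ (i, j))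

/-- Monomials of the `D'(m|n)`-module `F_a`: such a monomial
`t_0^{a−k_1−⋯−k_{n̄}} t_1^{k_1}⋯t_m^{k_m} t_{1̄}^{k_{1̄}}⋯t_{n̄}^{k_{n̄}}` is determined by the
exponents `(k_1,…,k_m,k_{1̄},…,k_{n̄})`. -/
abbrev FaMon (m n : ℕ) := (Fin m → ℕ) × (Fin n → Bool)

/-- The module `F_a`, as the vector space with basis its monomials. -/
abbrev FaSp (m n : ℕ) : Type := FaMon m n →₀ ℂ

/-- A basis monomial of `F_a`. -/
def amono {m n : ℕ} (x : FaMon m n) : FaSp m n := Finsupp.single x 1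

/-- The parity of a monomial of `F_a`. -/
def parM {m n : ℕ} (x : FaMon m n) : ℕ := cntA x.2

/-- The monomial `t_0^a` of `F_a`. -/
def hwMon (m n : ℕ) : FaMon m n := (fun _ => 0, fun _ => false)

/-- Multiplication by `t_i/t_0` on `F_a`, even `i`. -/
def aDivE {m n : ℕ} (i : Fin m) : Module.End ℂ (FaSp m n) :=
  mkOp fun x => amono (Function.update x.1 i (x.1 i + 1), x.2)

/-- Multiplication by `t_ī/t_0` on `F_a`, odd `ī`. -/
def aDivO {m n : ℕ} (i : Fin n) : Module.End ℂ (FaSp m n) :=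
  mkOp fun x => if x.2 i then 0 else
    ((-1 : ℂ) ^ (cntB x.2 i)) • amono (x.1, Function.update x.2 i true)

/-- The operator `t_0∂_0` on `F_a` (the exponent of `t_0` is `a` minus the total degree of the
other variables). -/
def aPar0 {m n : ℕ} (a : ℂ) : Module.End ℂ (FaSp m n) :=
  mkOp fun x => (a - (∑ i, (x.1 i : ℂ)) - (cntA x.2 : ℂ)) • amono x

/-- The operator `t_0∂_i` on `F_a`, even `i`. -/
def aParE {m n : ℕ} (i : Fin m) : Module.End ℂ (FaSp m n) :=
  mkOp fun x => (x.1 i : ℂ) • amono (Function.update x.1 i (x.1 i - 1), x.2)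

/-- The operator `t_0∂_ī` on `F_a`, odd `ī`. -/
def aParO {m n : ℕ} (i : Fin n) : Module.End ℂ (FaSp m n) :=
  mkOp fun x => if x.2 i then
    ((-1 : ℂ) ^ (cntB x.2 i)) • amono (x.1, Function.update x.2 i false) else 0

/-- `t_i/t_0` on `F_a` for `i ∈ I`. -/
def aDiv {m n : ℕ} : Ind m n → Module.End ℂ (FaSp m n) := Sum.elim aDivE aDivO

/-- `t_0∂_i` on `F_a` for `i ∈ Î`. -/
def aParB {m n : ℕ} (a : ℂ) : Ind (m+1) n → Module.End ℂ (FaSp m n) :=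
  Sum.elim (Fin.cases (aPar0 a) aParE) aParO

/-- `t_i/t_0` on `F_a` for `i ∈ Î`. -/
def aDivB {m n : ℕ} : Ind (m+1) n → Module.End ℂ (FaSp m n) :=
  Sum.elim (Fin.cases 1 aDivE) aDivO

/-- The operator `t_i∂_j` on `F_a`, `i, j ∈ Î`. -/
def aTD {m n : ℕ} (a : ℂ) (i j : Ind (m+1) n) : Module.End ℂ (FaSp m n) :=
  aDivB i * aParB a j

/-- The simple highest weight module `L(λ)` over `U(gl(m|n))`: a simple module with a
(nonzero) highest weight vector of weight `λ`. -/
structure SimpleHW (m n : ℕ) (lam : Ind m n → ℂ) where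
  L : Type
  [acg : AddCommGroup L]
  [mod : Module ℂ L]
  ρ : UEA (Ind m n) pI →ₐ[ℂ] Module.End ℂ L
  v : L
  v_ne : v ≠ 0
  hw : ∀ i j : Ind m n, iltI i j → ρ (gen pI i j) v = 0
  hwt : ∀ i : Ind m n, ρ (gen pI i i) v = lam i • v
  simple : ∀ N : Submodule ℂ L, (∀ u x, x ∈ N → ρ u x ∈ N) → N = ⊥ ∨ N = ⊤

attribute [instance] SimpleHW.acg SimpleHW.mod

/-- The Verma module `M(λ)` over `U(gl(m|n))`: a module generated by a highest weight vector
of weight `λ` which is universal among such. -/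
structure VermaM (m n : ℕ) (lam : Ind m n → ℂ) where
  L : Type
  [acg : AddCommGroup L]
  [mod : Module ℂ L]
  ρ : UEA (Ind m n) pI →ₐ[ℂ] Module.End ℂ L
  v : L
  v_ne : v ≠ 0
  hw : ∀ i j : Ind m n, iltI i j → ρ (gen pI i j) v = 0
  hwt : ∀ i : Ind m n, ρ (gen pI i i) v = lam i • v
  gens : ∀ N : Submodule ℂ L, (∀ u x, x ∈ N → ρ u x ∈ N) → v ∈ N → N = ⊤
  univ : ∀ (W : Type) [AddCommGroup W] [Module ℂ W]
      (ρW : UEA (Ind m n) pI →ₐ[ℂ] Module.End ℂ W) (w : W),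
      (∀ i j : Ind m n, iltI i j → ρW (gen pI i j) w = 0) →
      (∀ i : Ind m n, ρW (gen pI i i) w = lam i • w) →
      ∃ g : L →ₗ[ℂ] W, g v = w ∧ ∀ u x, g (ρ u x) = ρW u (g x)

attribute [instance] VermaM.acg VermaM.mod

/-- The predicate expressing that `Θ` is the representation of `U(gl(m+1|n))` on
`F_a ⊗ L` obtained via `φ_R` from a representation `ρ` of `U(gl(m|n))` on `L`, where the
central element `R` acts by the scalar `r`; the formulas for the action of the generators on
pure tensors (with the appropriate Koszul signs) are written out explicitly. -/
def IsTensorRep {m n : ℕ} (a r : ℂ) {L : Type} [AddCommGroup L] [Module ℂ L]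
    (ρ : UEA (Ind m n) pI →ₐ[ℂ] Module.End ℂ L)
    (Θ : UEA (Ind (m+1) n) pI →ₐ[ℂ] Module.End ℂ (FaSp m n ⊗[ℂ] L)) : Prop :=
  (∀ (c d : Ind m n) (x : FaMon m n) (v : L),
    Θ (gen pI (emb c) (emb d)) (amono x ⊗ₜ[ℂ] v) =
      (aTD a (emb c) (emb d)) (amono x) ⊗ₜ[ℂ] v
      + ((-1 : ℂ) ^ ((pI c + pI d) * parM x)) • (amono x ⊗ₜ[ℂ] (ρ (gen pI c d) v))
      + (if c = d then (((-1 : ℂ) ^ (pI c * pI d)) * r) • (amono x ⊗ₜ[ℂ] v) else 0)) ∧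
  (∀ (c : Ind m n) (x : FaMon m n) (v : L),
    Θ (gen pI (emb c) z0) (amono x ⊗ₜ[ℂ] v) =
      (aTD a (emb c) z0) (amono x) ⊗ₜ[ℂ] v
      - ∑ j : Ind m n, (((-1 : ℂ) ^ (pI c * pI j)) * ((-1 : ℂ) ^ ((pI c + pI j) * parM x))) •
          ((aDiv j (amono x)) ⊗ₜ[ℂ] (ρ (gen pI c j) v))) ∧
  (∀ (d : Ind m n) (x : FaMon m n) (v : L),
    Θ (gen pI z0 (emb d)) (amono x ⊗ₜ[ℂ] v) = (aTD a z0 (emb d)) (amono x) ⊗ₜ[ℂ] v) ∧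
  (∀ (x : FaMon m n) (v : L),
    Θ (gen pI z0 z0) (amono x ⊗ₜ[ℂ] v) =
      (aTD a z0 z0) (amono x) ⊗ₜ[ℂ] v + r • (amono x ⊗ₜ[ℂ] v))

/-- The shifted weight `λ̃ = (a+r, λ_1+r, …, λ_m+r, λ_{1̄}−r, …, λ_{n̄}−r)`. -/
def lamTilde {m n : ℕ} (a r : ℂ) (lam : Ind m n → ℂ) : Ind (m+1) n → ℂ :=
  Sum.elim (Fin.cases (a + r) fun k => lam (Sum.inl k) + r) fun k => lam (Sum.inr k) - r

/-- The Weyl vector `ρ_{m|n} = (m, m−1, …, 1, −1, −2, …, −n)`. -/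
def rhoS {m n : ℕ} : Ind m n → ℂ := Sum.elim (fun k => (m : ℂ) - k) fun k => -(k : ℂ) - 1

/-- Antidominance of a weight of `gl(m|n)`:
`⟨λ+ρ, α^∨⟩ ∉ ℤ_{>0}` for all positive even roots `α`. -/
def Antidom {m n : ℕ} (lam : Ind m n → ℂ) : Prop :=
  (∀ i j : Fin m, i < j → ¬∃ N : ℕ,
    (lam (Sum.inl i) + rhoS (m:=m) (n:=n) (Sum.inl i)) - (lam (Sum.inl j) + rhoS (m:=m) (n:=n) (Sum.inl j)) = (N : ℂ) + 1) ∧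
  (∀ i j : Fin n, i < j → ¬∃ N : ℕ,
    (lam (Sum.inr i) + rhoS (m:=m) (n:=n) (Sum.inr i)) - (lam (Sum.inr j) + rhoS (m:=m) (n:=n) (Sum.inr j)) = (N : ℂ) + 1)

/-- Typicality of a weight of `gl(m|n)`:
`(λ+ρ, α) ≠ 0` for all positive odd isotropic roots `α = δ_i − ε_j`. -/
def Typical {m n : ℕ} (lam : Ind m n → ℂ) : Prop :=
  ∀ (i : Fin m) (j : Fin n),
    (lam (Sum.inl i) + rhoS (m:=m) (n:=n) (Sum.inl i)) + (lam (Sum.inr j) + rhoS (m:=m) (n:=n) (Sum.inr j)) ≠ 0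

/-- `f(i) = Σ_{j<i} (−1)^{|j|}`. -/
def fshift {m n : ℕ} : Ind m n → ℂ := Sum.elim (fun k => (k : ℂ)) fun k => (m : ℂ) - (k : ℂ)

/-! ### Helper material -/

lemma mkOp_amono {m n : ℕ} {M : Type} [AddCommGroup M] [Module ℂ M] (g : FaMon m n → M)
    (x : FaMon m n) : mkOp g (amono x) = g x := by
  simp [mkOp, amono]

/-- Total degree. -/
def hdeg {m n : ℕ} (x : FaMon m n) : ℕ := (∑ i, x.1 i) + cntA x.2

/-- The variable `t_i` occurs in `x`. -/
def hocc {m n : ℕ} (x : FaMon m n) : Ind m n → Prop :=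
  Sum.elim (fun i => x.1 i ≠ 0) (fun i => x.2 i = true)

/-- Position in the total order. -/
def hrank {m n : ℕ} : Ind m n → ℕ := Sum.elim (fun k => (k : ℕ)) (fun k => m + (k : ℕ))

lemma iltI_iff {m n : ℕ} (i j : Ind m n) : iltI i j ↔ hrank i < hrank j := by
  rcases i with i | i <;> rcases j with j | j <;> simp [iltI, hrank] <;> omega

lemma hrank_inj {m n : ℕ} (i j : Ind m n) (h : hrank i = hrank j) : i = j := by
  rcases i with i | i <;> rcases j with j | j <;> simp [hrank] at h ⊢ <;> omega

lemma fshift_eq {m n : ℕ} (i : Ind m n) :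
    (∑ j : Ind m n, if hrank j < hrank i then (-1 : ℂ) ^ pI j else 0) = fshift i := by
  rw [Fintype.sum_sum_type]
  rcases i with i | i
  · simp [hrank, pI, fshift, Finset.sum_ite]
    have : (Finset.univ.filter fun x : Fin n => m + (x : ℕ) < (i : ℕ)) = ∅ := by
      rw [Finset.filter_eq_empty_iff]; intro x _; omega
    simp [this, Finset.filter_gt_eq_Iio]
  · simp [hrank, pI, fshift, Finset.sum_ite]
    rw [Finset.filter_true_of_mem (by intro x _; omega)]
    simp only [Finset.card_univ, Fintype.card_fin, Finset.filter_gt_eq_Iio, Fin.card_Iio]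
    ring

lemma sum_update_succ {m : ℕ} (f : Fin m → ℕ) (i : Fin m) :
    ∑ j, Function.update f i (f i + 1) j = (∑ j, f j) + 1 := by
  rw [Finset.sum_update_of_mem (Finset.mem_univ i),
    ← Finset.add_sum_erase _ _ (Finset.mem_univ i), Finset.sdiff_singleton_eq_erase]
  ring

lemma cntA_update {n : ℕ} (b : Fin n → Bool) (i : Fin n) (h : b i = false) :
    cntA (Function.update b i true) = cntA b + 1 := by
  unfold cntA
  have : (Finset.univ.filter fun j => Function.update b i true j = true)
      = insert i (Finset.univ.filter fun j => b j = true) := by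
    ext j
    by_cases hj : j = i
    · subst hj; simp
    · simp [hj]
  rw [this, Finset.card_insert_of_notMem (by simp [h])]

lemma cntB_update {n : ℕ} (b : Fin n → Bool) (i : Fin n) (c : Bool) :
    cntB (Function.update b i c) i = cntB b i := by
  unfold cntB
  congr 1
  ext j
  by_cases hj : j = i
  · subst hj; simp
  · simp [hj]

lemma aDivB_emb {m n : ℕ} (i : Ind m n) : aDivB (emb i) = aDiv i := by
  rcases i with i | i <;> simp [aDivB, emb, aDiv]

lemma neg_one_mul_self (k : ℕ) : ((-1 : ℂ) ^ k) * ((-1 : ℂ) ^ k) = 1 := by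
  rw [← mul_pow]; simp

lemma L1 {m n : ℕ} (i : Ind m n) (x : FaMon m n) :
    aDiv i (amono x) = 0 ∨ ∃ s : ℂ, ∃ y, s ≠ 0 ∧ aDiv i (amono x) = s • amono y ∧
      hdeg y = hdeg x + 1 ∧ hocc y i ∧ (∀ j, hocc x j → hocc y j) ∧ parM y = parM x + pI i := by
  rcases i with i | i
  · right
    refine ⟨1, _, one_ne_zero, by rw [one_smul]; exact mkOp_amono _ _, ?_, ?_, ?_, ?_⟩
    · simp only [hdeg, sum_update_succ]; ring
    · simp [hocc]
    · rintro (j | j) hj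
      · by_cases h : j = i
        · subst h; simp [hocc]
        · simpa [hocc, h] using hj
      · simpa [hocc] using hj
    · simp [parM, pI]
  · have e : aDiv (Sum.inr i) (amono x) = _ := mkOp_amono _ x
    rcases hb : x.2 i with _ | _
    · right
      rw [hb] at e
      refine ⟨_, _, ?_, e, ?_, ?_, ?_, ?_⟩
      · exact pow_ne_zero _ (by norm_num)
      · simp only [hdeg, cntA_update _ _ hb]; ring
      · simp [hocc]
      · rintro (j | j) hj
        · simpa [hocc] using hj
        · by_cases h : j = i
          · subst h; simp [hocc]
          · simpa [hocc, h] using hj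
      · simp [parM, pI, cntA_update _ _ hb]
    · left
      rw [e, hb]; rfl

lemma L4 {m n : ℕ} (i : Ind m n) (y : FaMon m n) (h : hocc y i) :
    ∃ s : ℂ, ∃ x, s ≠ 0 ∧ hdeg y = hdeg x + 1 ∧ aDiv i (amono x) = s • amono y ∧
      ∃ s' : ℂ, ∀ a, aParB a (emb i) (amono y) = s' • amono x := by
  rcases i with i | i
  · have h' : y.1 i ≠ 0 := h
    have hy : y.1 = Function.update (Function.update y.1 i (y.1 i - 1)) i
        ((Function.update y.1 i (y.1 i - 1)) i + 1) := by
      ext j; by_cases hj : j = i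
      · subst hj; simp; omega
      · simp [hj]
    refine ⟨1, (Function.update y.1 i (y.1 i - 1), y.2), one_ne_zero, ?_, ?_, (y.1 i : ℂ), ?_⟩
    · simp only [hdeg]
      conv_lhs => rw [hy]
      rw [sum_update_succ]; ring
    · rw [one_smul]
      refine (mkOp_amono _ _).trans ?_
      show amono (_, _) = _
      rw [← hy]
    · intro a
      exact mkOp_amono _ _
  · have h' : y.2 i = true := h
    have hy : Function.update (Function.update y.2 i false) i true = y.2 := by
      rw [Function.update_idem, ← h', Function.update_eq_self]
    refine ⟨(-1) ^ cntB y.2 i, (y.1, Function.update y.2 i false),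
      pow_ne_zero _ (by norm_num), ?_, ?_, (-1) ^ cntB y.2 i, ?_⟩
    · simp only [hdeg]
      conv_lhs => rw [← hy]
      rw [cntA_update _ _ (by simp)]; ring
    · refine (mkOp_amono _ _).trans ?_
      simp [hy, cntB_update]
    · intro a
      refine (mkOp_amono _ _).trans ?_
      simp [h']

lemma L2 {m n : ℕ} (a : ℂ) (i : Ind m n) (y : FaMon m n) (h : ¬ hocc y i) :
    aParB a (emb i) (amono y) = 0 := by
  rcases i with i | i
  · have h' : y.1 i = 0 := by simpa [hocc] using h
    refine (mkOp_amono _ _).trans ?_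
    simp [h']
  · have h' : y.2 i = false := by simpa [hocc] using h
    refine (mkOp_amono _ _).trans ?_
    simp [h']

lemma L3 {m n : ℕ} (a : ℂ) (j : Ind m n) (x : FaMon m n) :
    ∃ μ : ℂ, aParB a (emb j) (aDiv j (amono x)) = (1 + μ) • amono x ∧ (μ = 0 ∨ hocc x j) := by
  rcases j with j | j
  · refine ⟨x.1 j, ?_, ?_⟩
    · have e : aDiv (Sum.inl j) (amono x) = _ := mkOp_amono _ x
      rw [e]
      refine (mkOp_amono _ _).trans ?_
      simp [add_comm]
    · by_cases h : x.1 j = 0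
      · left; simp [h]
      · right; exact h
  · have e : aDiv (Sum.inr j) (amono x) = _ := mkOp_amono _ x
    rcases hb : x.2 j with _ | _
    · refine ⟨0, ?_, Or.inl rfl⟩
      rw [e, hb]
      have e2 : aParB a (emb (Sum.inr j)) (amono (x.1, Function.update x.2 j true)) = _ :=
        mkOp_amono _ _
      rw [if_neg (by simp), map_smul, e2]
      simp only [id]
      rw [if_pos (by simp), cntB_update, Function.update_idem, smul_smul, neg_one_mul_self, ← hb, Function.update_eq_self]
      simp
    · refine ⟨-1, ?_, Or.inr hb⟩
      rw [e, hb]; simp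

lemma L5 {m n : ℕ} (a : ℂ) (x : FaMon m n) :
    aParB a z0 (amono x) = (a - hdeg x) • amono x := by
  refine (mkOp_amono _ _).trans ?_
  simp [hdeg, sub_sub]

lemma L5' {m n : ℕ} : (aDivB z0 : Module.End ℂ (FaSp m n)) = 1 := rfl

lemma L6 {m n : ℕ} (y : FaMon m n) (h : hdeg y = 0) : y = hwMon m n := by
  simp [hdeg, cntA, Finset.filter_eq_empty_iff] at h
  ext i
  · simp [hwMon, h.1]
  · simp [hwMon, h.2]

lemma L6' {m n : ℕ} (y : FaMon m n) (h : hdeg y ≠ 0) : ∃ i, hocc y i := by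
  by_contra! hc
  apply h
  have h1 : ∀ i, y.1 i = 0 := fun i => by simpa [hocc] using hc (Sum.inl i)
  have h2 : ∀ i, y.2 i = false := fun i => by simpa [hocc] using hc (Sum.inr i)
  simp [hdeg, cntA, h1, h2]

lemma hw_nocc {m n : ℕ} (i : Ind m n) : ¬ hocc (hwMon m n) i := by
  rcases i with i | i <;> simp [hocc, hwMon]

lemma uea_stable {ι : Type} [DecidableEq ι] {p : ι → ℕ} {L : Type} [AddCommGroup L] [Module ℂ L]
    (ρ : UEA ι p →ₐ[ℂ] Module.End ℂ L) (S : Submodule ℂ L)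
    (h : ∀ i j, ∀ w ∈ S, ρ (gen p i j) w ∈ S) : ∀ u, ∀ w ∈ S, ρ u w ∈ S := by
  intro u
  obtain ⟨u, rfl⟩ := RingQuot.mkAlgHom_surjective ℂ (glRel ι p) u
  induction u using FreeAlgebra.induction with
  | grade0 c =>
    intro w hw
    rw [AlgHom.commutes, AlgHom.commutes]
    exact S.smul_mem c hw
  | grade1 x => exact h x.1 x.2
  | mul a b ha hb =>
    intro w hw
    rw [map_mul, map_mul]
    exact ha _ (hb _ hw)
  | add a b ha hb =>
    intro w hw
    rw [map_add, map_add]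
    exact S.add_mem (ha _ hw) (hb _ hw)

/-- The vectors `w` with `y ⊗ w ∈ N` for all monomials `y` of degree `k`. -/
def hsub {m n : ℕ} {L : Type} [AddCommGroup L] [Module ℂ L]
    (N : Submodule ℂ (FaSp m n ⊗[ℂ] L)) (k : ℕ) : Submodule ℂ L where
  carrier := {w | ∀ y, hdeg y = k → amono y ⊗ₜ[ℂ] w ∈ N}
  add_mem' := by
    intro u w hu hw y hy
    rw [TensorProduct.tmul_add]
    exact N.add_mem (hu y hy) (hw y hy)
  zero_mem' := by
    intro y _
    rw [TensorProduct.tmul_zero]; exact N.zero_mem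
  smul_mem' := by
    intro c w hw y hy
    rw [TensorProduct.tmul_smul]
    exact N.smul_mem c (hw y hy)

lemma aTD_deg {m n : ℕ} (a : ℂ) (c d : Ind m n) (y : FaMon m n) :
    ∃ s : ℂ, ∃ z, aTD a (emb c) (emb d) (amono y) = s • amono z ∧ hdeg z = hdeg y := by
  by_cases h : hocc y d
  · obtain ⟨s, x, -, hd, -, s', hs'⟩ := L4 d y h
    rcases L1 c x with h0 | ⟨t, z, -, hz, hdz, -⟩
    · refine ⟨0, y, ?_, rfl⟩
      simp [aTD, hs', aDivB_emb, h0]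
    · refine ⟨s' * t, z, ?_, by omega⟩
      simp [aTD, hs', aDivB_emb, hz, smul_smul]
  · exact ⟨0, y, by simp [aTD, L2 a d y h], rfl⟩

lemma cancel_neg {M : Type*} [AddCommMonoid M] [Module ℂ M] (A : M) : A + (-1 : ℂ) • A = 0 := by
  have h : ((1 : ℂ) + (-1)) • A = 0 := by rw [add_neg_cancel, zero_smul]
  rwa [add_smul, one_smul] at h

lemma cancel_three {M : Type*} [AddCommMonoid M] [Module ℂ M] (A B C : M) :
    A + B + C + ((-1 : ℂ) • C + (-1 : ℂ) • A) = B := by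
  have : A + B + C + ((-1 : ℂ) • C + (-1 : ℂ) • A)
      = B + (A + (-1 : ℂ) • A) + (C + (-1 : ℂ) • C) := by abel
  rw [this, cancel_neg, cancel_neg, add_zero, add_zero]

lemma step_top {m n : ℕ} {a r : ℂ} {lam : Ind m n → ℂ} (HW : SimpleHW m n lam)
    (Θ : UEA (Ind (m+1) n) pI →ₐ[ℂ] Module.End ℂ (FaSp m n ⊗[ℂ] HW.L))
    (hΘ : IsTensorRep a r HW.ρ Θ) (N : Submodule ℂ (FaSp m n ⊗[ℂ] HW.L))
    (hN : ∀ (u : UEA (Ind (m+1) n) pI), ∀ x ∈ N, Θ u x ∈ N) (k : ℕ)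
    (hv : HW.v ∈ hsub N k) : hsub N k = ⊤ := by
  have hst : ∀ u x, x ∈ hsub N k → HW.ρ u x ∈ hsub N k := by
    apply uea_stable
    intro c d w hw y hy
    have h1 := hN (gen pI (emb c) (emb d)) _ (hw y hy)
    rw [hΘ.1 c d y w] at h1
    have h3 : (if c = d then (((-1 : ℂ) ^ (pI c * pI d)) * r) • (amono y ⊗ₜ[ℂ] w) else 0) ∈ N := by
      split_ifs
      · exact N.smul_mem _ (hw y hy)
      · exact N.zero_mem
    have h2 : (aTD a (emb c) (emb d)) (amono y) ⊗ₜ[ℂ] w ∈ N := by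
      obtain ⟨s, z, e, hz⟩ := aTD_deg a c d y
      rw [e, ← TensorProduct.smul_tmul']
      exact N.smul_mem _ (hw z (hz.trans hy))
    have h5 := N.add_mem h1 (N.add_mem (N.smul_mem (-1 : ℂ) h3) (N.smul_mem (-1 : ℂ) h2))
    have h4 := N.smul_mem ((-1 : ℂ) ^ ((pI c + pI d) * parM y)) h5
    convert h4 using 1
    rw [cancel_three, smul_smul, neg_one_mul_self, one_smul]
  rcases HW.simple (hsub N k) hst with h | h
  · rw [h] at hv
    exact absurd ((Submodule.mem_bot ℂ).1 hv) HW.v_ne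
  · exact h

lemma key {m n : ℕ} {a r : ℂ} {lam : Ind m n → ℂ} (HW : SimpleHW m n lam)
    (Θ : UEA (Ind (m+1) n) pI →ₐ[ℂ] Module.End ℂ (FaSp m n ⊗[ℂ] HW.L))
    (hΘ : IsTensorRep a r HW.ρ Θ)
    (hcond : ∀ i : Ind m n, ¬∃ N : ℕ,
      a + fshift i - ((-1 : ℂ) ^ (pI i)) * lam i = (N : ℂ))
    (N : Submodule ℂ (FaSp m n ⊗[ℂ] HW.L))
    (hN : ∀ (u : UEA (Ind (m+1) n) pI), ∀ x ∈ N, Θ u x ∈ N) (k : ℕ)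
    (hk : hsub N k = ⊤) : ∀ (q : ℕ) (i : Ind m n), hrank i = q →
      ∀ y, hdeg y = k + 1 → hocc y i → amono y ⊗ₜ[ℂ] HW.v ∈ N := by
  intro q
  induction q using Nat.strong_induction_on with
  | _ q ih =>
  intro i hi y hy hoc
  obtain ⟨s, x, hs, hdx, hx, -⟩ := L4 i y hoc
  have hdx' : hdeg x = k := by omega
  suffices H : aDiv i (amono x) ⊗ₜ[ℂ] HW.v ∈ N by
    rw [hx, ← TensorProduct.smul_tmul'] at H
    exact (N.smul_mem_iff hs).1 H
  set T := aDiv i (amono x) ⊗ₜ[ℂ] HW.v with hT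
  -- the relation from `e_ij`, `j < i`
  have hlow : ∀ j : Ind m n, hrank j < hrank i →
      (((-1 : ℂ) ^ (pI i * pI j)) * ((-1 : ℂ) ^ ((pI i + pI j) * parM x))) •
          ((aDiv j (amono x)) ⊗ₜ[ℂ] (HW.ρ (gen pI i j) HW.v)) + (-1 : ℂ) ^ pI j • T ∈ N := by
    intro j hj
    have hne : i ≠ j := by rintro rfl; omega
    obtain ⟨μ, hμ, hμ'⟩ := L3 a j x
    have hμT : μ • T ∈ N := by
      rcases hμ' with h0 | h0
      · rw [h0, zero_smul]; exact N.zero_mem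
      · apply N.smul_mem
        rw [hT]
        rw [hx, ← TensorProduct.smul_tmul']
        apply N.smul_mem
        apply ih (hrank j) (by omega) j rfl y hy
        rcases L1 i x with h1 | ⟨t, z, ht, hz, -, -, hz2, -⟩
        · rw [hx] at h1
          exfalso
          have := congrArg (fun f => f y) h1
          simp [amono, hs] at this
        · have : y = z := by
            by_contra hyz
            rw [hx] at hz
            have := congrArg (fun f => f y) hz
            simp [amono, hs, Ne.symm hyz] at this
          rw [this]; exact hz2 j h0
    rcases L1 j x with h1 | ⟨t, z, ht, hz, hdz, hzj, -, hpz⟩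
    · -- then `1 + μ = 0`
      rw [h1, map_zero] at hμ
      have : (1 + μ) = 0 := by
        have := congrArg (fun f => f x) hμ
        simpa [amono] using this.symm
      have hm : μ = -1 := by linear_combination this
      rw [hm] at hμT
      have hT' : T ∈ N := (N.smul_mem_iff (by norm_num)).1 hμT
      rw [h1, TensorProduct.zero_tmul, smul_zero, zero_add]
      exact N.smul_mem _ hT'
    · have hzN : amono z ⊗ₜ[ℂ] HW.v ∈ N :=
        ih (hrank j) (by omega) j rfl z (by omega) hzj
      have h2 := N.smul_mem t (hN (gen pI (emb i) (emb j)) _ hzN)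
      rw [hΘ.1 i j z HW.v, if_neg hne, add_zero, smul_add, TensorProduct.smul_tmul',
        ← map_smul, ← hz, smul_comm, TensorProduct.smul_tmul', ← hz] at h2
      have e1 : aTD a (emb i) (emb j) (aDiv j (amono x)) = (1 + μ) • aDiv i (amono x) := by
        simp [aTD, aDivB_emb, hμ]
      rw [e1, ← TensorProduct.smul_tmul', ← hT, hpz, add_smul, one_smul,
        add_right_comm] at h2
      replace h2 := N.add_mem h2 (N.smul_mem (-1 : ℂ) hμT)
      rw [add_assoc, cancel_neg, add_zero] at h2
      have h3 := N.smul_mem ((-1 : ℂ) ^ pI j) h2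
      rw [smul_add, smul_smul, add_comm] at h3
      convert h3 using 3
      rcases i with i | i <;> rcases j with j | j <;> simp [pI, pow_add, pow_mul]
  -- the relation from `e_i0`
  have h0 := hN (gen pI (emb i) z0) _ ((by rw [hk]; trivial : HW.v ∈ hsub N k) x hdx')
  rw [hΘ.2.1 i x HW.v] at h0
  have e2 : aTD a (emb i) z0 (amono x) = (a - k) • aDiv i (amono x) := by
    simp [aTD, aDivB_emb, L5, hdx']
  rw [e2, ← TensorProduct.smul_tmul', ← hT] at h0
  have hsum : (∑ j : Ind m n,
      (((-1 : ℂ) ^ (pI i * pI j)) * ((-1 : ℂ) ^ ((pI i + pI j) * parM x))) •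
          ((aDiv j (amono x)) ⊗ₜ[ℂ] (HW.ρ (gen pI i j) HW.v)))
      + (∑ j : Ind m n, ((if hrank j < hrank i then (-1 : ℂ) ^ pI j else 0)
          - (if j = i then (-1 : ℂ) ^ pI i * lam i else 0))) • T ∈ N := by
    rw [Finset.sum_smul, ← Finset.sum_add_distrib]
    apply N.sum_mem
    intro j _
    rcases lt_trichotomy (hrank j) (hrank i) with h | h | h
    · rw [if_pos h, if_neg (by rintro rfl; omega), sub_zero]
      exact hlow j h
    · obtain rfl := hrank_inj j i h
      rw [HW.hwt, if_neg (lt_irrefl _), if_pos rfl, TensorProduct.tmul_smul, ← hT, smul_smul,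
        ← add_smul]
      have : ((-1 : ℂ) ^ (pI j * pI j)) * ((-1 : ℂ) ^ ((pI j + pI j) * parM x)) * lam j
          + (0 - (-1 : ℂ) ^ pI j * lam j) = 0 := by
        rcases j with j | j <;> simp [pI, pow_mul]
      rw [this, zero_smul]
      exact N.zero_mem
    · rw [if_neg (by omega), if_neg (by rintro rfl; omega), HW.hw i j ((iltI_iff i j).2 h)]
      simp
  rw [Finset.sum_sub_distrib, fshift_eq, Finset.sum_ite_eq' Finset.univ i,
    if_pos (Finset.mem_univ i)] at hsum
  have h4 := N.add_mem h0 hsum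
  have h5 : (a + fshift i - (-1 : ℂ) ^ pI i * lam i - k) • T ∈ N := by
    convert h4 using 1
    module
  refine (N.smul_mem_iff ?_).1 h5
  intro hc
  exact hcond i ⟨k, by linear_combination hc⟩

/-- Theorem 4.2.  If `a + f(i) − (−1)^{|i|}λ_i` is not a nonnegative integer
for every `i ∈ I`, then `F_a ⊗ L(λ)` is a highest weight module, generated by its highest
weight vector `t_0^a ⊗ v_λ`. -/
theorem stmt6 (m n : ℕ) (a r : ℂ) (lam : Ind m n → ℂ) (HW : SimpleHW m n lam)
    (Θ : UEA (Ind (m+1) n) pI →ₐ[ℂ] Module.End ℂ (FaSp m n ⊗[ℂ] HW.L))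
    (hΘ : IsTensorRep a r HW.ρ Θ)
    (hcond : ∀ i : Ind m n, ¬∃ N : ℕ,
      a + fshift i - ((-1 : ℂ) ^ (pI i)) * lam i = (N : ℂ)) :
    (∀ i j : Ind (m+1) n, iltI i j →
      Θ (gen pI i j) (amono (hwMon m n) ⊗ₜ[ℂ] HW.v) = 0) ∧
    (∀ N : Submodule ℂ (FaSp m n ⊗[ℂ] HW.L),
      (∀ (u : UEA (Ind (m+1) n) pI), ∀ x ∈ N, Θ u x ∈ N) →
      amono (hwMon m n) ⊗ₜ[ℂ] HW.v ∈ N → N = ⊤) := by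
  obtain ⟨h1, h2, h3, h4⟩ := id hΘ
  refine ⟨?_, ?_⟩
  · intro i j hij
    have hj : ∃ d : Ind m n, j = emb d := by
      rcases j with j | j
      · rcases Fin.eq_zero_or_eq_succ j with rfl | ⟨j, rfl⟩
        · rcases i with i | i <;> simp [iltI] at hij
        · exact ⟨Sum.inl j, rfl⟩
      · exact ⟨Sum.inr j, rfl⟩
    obtain ⟨d, rfl⟩ := hj
    have hi : i = z0 ∨ ∃ c : Ind m n, i = emb c := by
      rcases i with i | i
      · rcases Fin.eq_zero_or_eq_succ i with rfl | ⟨i, rfl⟩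
        · left; rfl
        · exact Or.inr ⟨Sum.inl i, rfl⟩
      · exact Or.inr ⟨Sum.inr i, rfl⟩
    have hz := L2 a d (hwMon m n) (hw_nocc d)
    rcases hi with rfl | ⟨c, rfl⟩
    · rw [h3]
      simp [aTD, hz]
    · have hcd : iltI c d := by
        rcases c with c | c <;> rcases d with d | d <;> simpa [iltI, emb] using hij
      have hne : c ≠ d := by
        rintro rfl
        rw [iltI_iff] at hcd
        exact lt_irrefl _ hcd
      rw [h1, HW.hw c d hcd, if_neg hne]
      simp [aTD, hz]
  · intro N hN hv
    have main : ∀ k, hsub N k = ⊤ := by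
      intro k
      induction k with
      | zero =>
        apply step_top HW Θ hΘ N hN
        intro y hy
        rw [L6 y hy]
        exact hv
      | succ k ihk =>
        apply step_top HW Θ hΘ N hN
        intro y hy
        obtain ⟨i, hi⟩ := L6' y (by omega)
        exact key HW Θ hΘ hcond N hN k ihk _ i rfl y hy hi
    rw [eq_top_iff]
    intro t _
    induction t using TensorProduct.induction_on with
    | zero => exact N.zero_mem
    | add x y hx hy => exact N.add_mem (hx trivial) (hy trivial)
    | tmul f w =>
      induction f using Finsupp.induction_linear with
      | zero => rw [TensorProduct.zero_tmul]; exact N.zero_mem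
      | add f g hf hg => rw [TensorProduct.add_tmul]; exact N.add_mem (hf trivial) (hg trivial)
      | single x c =>
        have e : (Finsupp.single x c : FaSp m n) = c • amono x := by simp [amono]
        rw [e, ← TensorProduct.smul_tmul']
        have hw : w ∈ hsub N (hdeg x) := by rw [main]; trivial
        exact N.smul_mem c (hw x rfl)
end
end

section
/- For a gl(m|n)-weight λ, the U(gl(m+1|n))-module F_a ⊗ L(λ) is isomorphic to the simple highest weight gl(m+1|n)-module L(λ̃) if and only if F_a ⊗ L(λ) is generated by the highest weight vector t_0^a ⊗ v_λ. -/
set_option maxHeartbeats 1000000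
set_option synthInstance.maxHeartbeats 400000

noncomputable section
open scoped TensorProduct

lemma aux_inv_of_gen {ι : Type} {p : ι → ℕ} [DecidableEq ι] {V : Type} [AddCommGroup V] [Module ℂ V]
    (ρ : UEA ι p →ₐ[ℂ] Module.End ℂ V) (N : Submodule ℂ V)
    (h : ∀ i j, ∀ x ∈ N, ρ (gen p i j) x ∈ N) (u : UEA ι p) : ∀ x ∈ N, ρ u x ∈ N := by
  obtain ⟨u, rfl⟩ := RingQuot.mkAlgHom_surjective ℂ (glRel ι p) u
  induction u with
  | grade0 r =>
    intro x hx
    have : (RingQuot.mkAlgHom ℂ (glRel ι p)) (algebraMap ℂ _ r) = algebraMap ℂ _ r :=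
      AlgHom.commutes _ r
    rw [this, AlgHom.commutes]
    simpa [Module.algebraMap_end_apply] using N.smul_mem r hx
  | grade1 x => exact h x.1 x.2
  | mul a b ha hb =>
    intro x hx
    rw [map_mul, map_mul, Module.End.mul_apply]
    exact ha _ (hb _ hx)
  | add a b ha hb =>
    intro x hx
    rw [map_add, map_add, LinearMap.add_apply]
    exact N.add_mem (ha _ hx) (hb _ hx)

lemma aux_rel {ι : Type} {p : ι → ℕ} [DecidableEq ι] {V : Type} [AddCommGroup V] [Module ℂ V]
    (ρ : UEA ι p →ₐ[ℂ] Module.End ℂ V) (i j k l : ι) (y : V) :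
    ρ (gen p i j) (ρ (gen p k l) y) =
      ((-1 : ℂ) ^ ((p i + p j) * (p k + p l))) • ρ (gen p k l) (ρ (gen p i j) y)
      + ((if j = k then ρ (gen p i l) y else 0)
        - ((-1 : ℂ) ^ ((p i + p j) * (p k + p l))) • (if l = i then ρ (gen p k j) y else 0)) := by
  have h := RingQuot.mkAlgHom_rel ℂ (glRel.basic (ι := ι) (p := p) i j k l)
  have h2 := congrArg (fun u => ρ u y) h
  simp only [map_sub, map_mul, map_smul, LinearMap.sub_apply, Module.End.mul_apply,
    LinearMap.smul_apply] at h2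
  change ρ (gen p i j) (ρ (gen p k l) y) - _ • ρ (gen p k l) (ρ (gen p i j) y) = _ at h2
  rw [sub_eq_iff_eq_add'] at h2
  rw [h2]
  congr 2
  · split_ifs <;> simp [gen]
  · congr 1
    split_ifs <;> simp [gen]

/-- decreasing integer heights -/
def auxC {m n : ℕ} : Ind m n → ℤ := Sum.elim (fun a => -(a : ℤ)) (fun b => -((m : ℤ) + b))

lemma auxC_lt {m n : ℕ} {i j : Ind m n} (h : iltI i j) : auxC j < auxC i := by
  rcases i with i | i <;> rcases j with j | j <;> simp only [iltI, auxC, Sum.elim_inl, Sum.elim_inr] at *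
  · have : (i : ℕ) < j := h
    omega
  · have := i.2
    omega
  · have : (i : ℕ) < j := h
    omega

lemma iltI_tri {m n : ℕ} (i j : Ind m n) : iltI i j ∨ i = j ∨ iltI j i := by
  rcases i with i | i <;> rcases j with j | j <;> simp [iltI]
  · exact lt_trichotomy i j
  · exact lt_trichotomy i j

/-- smallest subspace containing `w` and closed under lowering operators -/
def auxP {m n : ℕ} {V : Type} [AddCommGroup V] [Module ℂ V]
    (ρ : UEA (Ind m n) pI →ₐ[ℂ] Module.End ℂ V) (w : V) : Submodule ℂ V :=
  sInf {N | w ∈ N ∧ ∀ i j : Ind m n, iltI j i → ∀ x ∈ N, ρ (gen pI i j) x ∈ N}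

lemma auxP_w {m n : ℕ} {V : Type} [AddCommGroup V] [Module ℂ V]
    (ρ : UEA (Ind m n) pI →ₐ[ℂ] Module.End ℂ V) (w : V) : w ∈ auxP ρ w := by
  rw [auxP, Submodule.mem_sInf]
  exact fun N hN => hN.1

lemma auxP_low {m n : ℕ} {V : Type} [AddCommGroup V] [Module ℂ V]
    (ρ : UEA (Ind m n) pI →ₐ[ℂ] Module.End ℂ V) (w : V) (i j : Ind m n) (h : iltI j i)
    (x : V) (hx : x ∈ auxP ρ w) : ρ (gen pI i j) x ∈ auxP ρ w := by
  rw [auxP, Submodule.mem_sInf] at *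
  exact fun N hN => hN.2 i j h x (hx N hN)

lemma auxP_gen {m n : ℕ} {V : Type} [AddCommGroup V] [Module ℂ V]
    (ρ : UEA (Ind m n) pI →ₐ[ℂ] Module.End ℂ V) (w : V) (lam : Ind m n → ℂ)
    (hw : ∀ i j : Ind m n, iltI i j → ρ (gen pI i j) w = 0)
    (hwt : ∀ i : Ind m n, ρ (gen pI i i) w = lam i • w)
    (i j : Ind m n) (x : V) (hx : x ∈ auxP ρ w) : ρ (gen pI i j) x ∈ auxP ρ w := by
  let Q : Submodule ℂ V := auxP ρ w ⊓ ⨅ i, ⨅ j, (auxP ρ w).comap (ρ (gen pI i j))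
  have hQ : ∀ y, y ∈ Q ↔ y ∈ auxP ρ w ∧ ∀ i j, ρ (gen pI i j) y ∈ auxP ρ w := by
    intro y
    simp [Q, Submodule.mem_iInf]
  have hle : auxP ρ w ≤ Q := by
    refine sInf_le ⟨?_, ?_⟩
    · rw [hQ]
      refine ⟨auxP_w ρ w, fun i j => ?_⟩
      rcases iltI_tri i j with h | h | h
      · rw [hw i j h]; exact zero_mem _
      · subst h; rw [hwt]; exact Submodule.smul_mem _ _ (auxP_w ρ w)
      · exact auxP_low ρ w i j h w (auxP_w ρ w)
    · intro i j h y hy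
      rw [hQ] at hy ⊢
      refine ⟨hy.2 i j, fun k l => ?_⟩
      rw [aux_rel]
      refine add_mem (Submodule.smul_mem _ _ (auxP_low ρ w i j h _ (hy.2 _ _))) (sub_mem ?_ ?_)
      · split_ifs
        · exact hy.2 _ _
        · exact zero_mem _
      · refine Submodule.smul_mem _ _ ?_
        split_ifs
        · exact hy.2 _ _
        · exact zero_mem _
  exact ((hQ x).1 (hle hx)).2 i j

lemma aux_hw_line {m n : ℕ} {V : Type} [AddCommGroup V] [Module ℂ V]
    (ρ : UEA (Ind m n) pI →ₐ[ℂ] Module.End ℂ V) (w : V) (lam : Ind m n → ℂ)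
    (hw : ∀ i j : Ind m n, iltI i j → ρ (gen pI i j) w = 0)
    (hwt : ∀ i : Ind m n, ρ (gen pI i i) w = lam i • w)
    (y : V) (hy : y ∈ auxP ρ w) (hyt : ∀ i : Ind m n, ρ (gen pI i i) y = lam i • y) :
    ∃ c : ℂ, y = c • w := by
  let H : Module.End ℂ V := ∑ i, (auxC i : ℂ) • ρ (gen pI i i)
  let μ : ℂ := ∑ i, (auxC i : ℂ) * lam i
  have hE : ∀ z : V, (∀ i : Ind m n, ρ (gen pI i i) z = lam i • z) →
      z ∈ Module.End.eigenspace H μ := by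
    intro z hz
    rw [Module.End.mem_eigenspace_iff]
    simp only [H, μ, LinearMap.sum_apply, LinearMap.smul_apply, hz, Finset.sum_smul, smul_smul]
  have hcomm : ∀ i j z, H (ρ (gen pI i j) z) =
      ρ (gen pI i j) (H z) + ((auxC i - auxC j : ℤ) : ℂ) • ρ (gen pI i j) z := by
    intro i j z
    have h1 : ∀ k, ρ (gen pI k k) (ρ (gen pI i j) z) = ρ (gen pI i j) (ρ (gen pI k k) z)
        + ((if k = i then ρ (gen pI i j) z else 0) - if k = j then ρ (gen pI i j) z else 0) := by
      intro k
      rw [aux_rel]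
      have : ((-1 : ℂ) ^ ((pI k + pI k) * (pI i + pI j))) = 1 :=
        Even.neg_one_pow (Even.mul_right ⟨_, rfl⟩ _)
      rw [this, one_smul, one_smul]
      congr 2
      · split_ifs with h
        · rw [h]
        · rfl
      · by_cases h : j = k
        · rw [if_pos h, if_pos h.symm, h]
        · rw [if_neg h, if_neg (Ne.symm h)]
    simp only [H, LinearMap.sum_apply, LinearMap.smul_apply, h1, smul_add, smul_sub,
      Finset.sum_add_distrib, Finset.sum_sub_distrib, map_sum, map_smul]
    simp [sub_smul]
  let Lw : Submodule ℂ V := ⨆ k : ℕ, Module.End.eigenspace H (μ - (k + 1))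
  have hlowE : ∀ i j : Ind m n, iltI j i → ∀ (ν : ℂ), ∃ d : ℕ, ∀ z ∈ Module.End.eigenspace H ν,
      ρ (gen pI i j) z ∈ Module.End.eigenspace H (ν - (d + 1)) := by
    intro i j h ν
    have := auxC_lt h
    obtain ⟨d, hd⟩ : ∃ d : ℕ, auxC i - auxC j = -((d : ℤ) + 1) :=
      ⟨(auxC j - auxC i - 1).toNat, by omega⟩
    refine ⟨d, fun z hz => ?_⟩
    rw [Module.End.mem_eigenspace_iff] at hz ⊢
    rw [hcomm, hz, hd, map_smul, ← add_smul]
    congr 1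
    push_cast
    ring
  have hLw : ∀ i j : Ind m n, iltI j i → ∀ x ∈ Lw, ρ (gen pI i j) x ∈ Lw := by
    intro i j h
    have : Lw ≤ Lw.comap (ρ (gen pI i j)) := by
      refine iSup_le fun k z hz => ?_
      obtain ⟨d, hd⟩ := hlowE i j h (μ - (k + 1))
      refine Submodule.mem_iSup_of_mem (k + d + 1) ?_
      have := hd z hz
      convert this using 2
      push_cast
      ring
    exact this
  have hP : auxP ρ w ≤ Submodule.span ℂ {w} ⊔ Lw := by
    refine sInf_le ⟨Submodule.mem_sup_left (Submodule.mem_span_singleton_self w), ?_⟩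
    intro i j h x hx
    obtain ⟨x1, h1, x2, h2, rfl⟩ := Submodule.mem_sup.1 hx
    obtain ⟨c, rfl⟩ := Submodule.mem_span_singleton.1 h1
    rw [map_add, map_smul]
    refine Submodule.mem_sup_right (add_mem (Submodule.smul_mem _ _ ?_) (hLw i j h _ h2))
    obtain ⟨d, hd⟩ := hlowE i j h μ
    exact Submodule.mem_iSup_of_mem d (hd w (hE w hwt))
  obtain ⟨x1, h1, x2, h2, hx⟩ := Submodule.mem_sup.1 (hP hy)
  obtain ⟨c, rfl⟩ := Submodule.mem_span_singleton.1 h1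
  refine ⟨c, ?_⟩
  have hx2 : x2 ∈ Module.End.eigenspace H μ := by
    have : x2 = y - c • w := by rw [← hx]; abel
    rw [this]
    exact sub_mem (hE y hyt) (Submodule.smul_mem _ _ (hE w hwt))
  have hle : Lw ≤ ⨆ (ν : ℂ) (_ : ν ≠ μ), Module.End.eigenspace H ν := by
    refine iSup_le fun k => ?_
    refine le_iSup₂_of_le (μ - (k + 1)) ?_ le_rfl
    intro h
    have : ((k + 1 : ℕ) : ℂ) = 0 := by push_cast; linear_combination -h
    exact absurd this (Nat.cast_ne_zero.2 (by omega))
  have hd := (Module.End.eigenspaces_iSupIndep H) μ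
  have := Submodule.disjoint_def.1 hd x2 hx2 (hle h2)
  rw [← hx, this, add_zero]

lemma aux_unique {m n : ℕ} {lam : Ind m n → ℂ} (A B : SimpleHW m n lam) :
    ∃ g : A.L ≃ₗ[ℂ] B.L, ∀ u x, g (A.ρ u x) = B.ρ u (g x) := by
  let σ : UEA (Ind m n) pI →ₐ[ℂ] Module.End ℂ (A.L × B.L) :=
    (LinearMap.prodMapAlgHom ℂ A.L B.L).comp (AlgHom.prod A.ρ B.ρ)
  have hσ : ∀ u x y, σ u (x, y) = (A.ρ u x, B.ρ u y) := fun u x y => rfl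
  let w : A.L × B.L := (A.v, B.v)
  have hw : ∀ i j : Ind m n, iltI i j → σ (gen pI i j) w = 0 := by
    intro i j h
    rw [hσ, A.hw i j h, B.hw i j h]; rfl
  have hwt : ∀ i : Ind m n, σ (gen pI i i) w = lam i • w := by
    intro i
    rw [hσ, A.hwt, B.hwt]; rfl
  let K := auxP σ w
  have hK : ∀ u, ∀ x ∈ K, σ u x ∈ K := aux_inv_of_gen σ K (auxP_gen σ w lam hw hwt)
  have hwK : w ∈ K := auxP_w σ w
  have hA : K.comap (LinearMap.inl ℂ A.L B.L) = ⊥ := by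
    refine (A.simple _ ?_).resolve_right ?_
    · intro u x hx
      have := hK u _ hx
      simpa [hσ] using this
    · intro h
      have h1 : (A.v, (0 : B.L)) ∈ K := by
        have : A.v ∈ K.comap (LinearMap.inl ℂ A.L B.L) := by rw [h]; trivial
        exact this
      obtain ⟨c, hc⟩ := aux_hw_line σ w lam hw hwt _ h1 (fun i => by rw [hσ, A.hwt]; simp)
      have e1 : A.v = c • A.v := congrArg Prod.fst hc
      have e2 : 0 = c • B.v := congrArg Prod.snd hc
      rcases smul_eq_zero.1 e2.symm with h0 | h0
      · rw [h0, zero_smul] at e1; exact A.v_ne e1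
      · exact B.v_ne h0
  have hB : K.comap (LinearMap.inr ℂ A.L B.L) = ⊥ := by
    refine (B.simple _ ?_).resolve_right ?_
    · intro u x hx
      have := hK u _ hx
      simpa [hσ] using this
    · intro h
      have h1 : ((0 : A.L), B.v) ∈ K := by
        have : B.v ∈ K.comap (LinearMap.inr ℂ A.L B.L) := by rw [h]; trivial
        exact this
      obtain ⟨c, hc⟩ := aux_hw_line σ w lam hw hwt _ h1 (fun i => by rw [hσ, B.hwt]; simp)
      have e1 : B.v = c • B.v := congrArg Prod.snd hc
      have e2 : 0 = c • A.v := congrArg Prod.fst hc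
      rcases smul_eq_zero.1 e2.symm with h0 | h0
      · rw [h0, zero_smul] at e1; exact B.v_ne e1
      · exact A.v_ne h0
  let f1 : K →ₗ[ℂ] A.L := (LinearMap.fst ℂ A.L B.L).comp K.subtype
  let f2 : K →ₗ[ℂ] B.L := (LinearMap.snd ℂ A.L B.L).comp K.subtype
  have i1 : Function.Injective f1 := by
    rw [← LinearMap.ker_eq_bot, LinearMap.ker_eq_bot']
    rintro ⟨⟨x, y⟩, hxy⟩ h
    have hx : x = 0 := h
    subst hx
    have : y ∈ K.comap (LinearMap.inr ℂ A.L B.L) := hxy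
    rw [hB, Submodule.mem_bot] at this
    subst this
    rfl
  have i2 : Function.Injective f2 := by
    rw [← LinearMap.ker_eq_bot, LinearMap.ker_eq_bot']
    rintro ⟨⟨x, y⟩, hxy⟩ h
    have hx : y = 0 := h
    subst hx
    have : x ∈ K.comap (LinearMap.inl ℂ A.L B.L) := hxy
    rw [hA, Submodule.mem_bot] at this
    subst this
    rfl
  have s1 : Function.Surjective f1 := by
    rw [← LinearMap.range_eq_top]
    refine (A.simple _ ?_).resolve_left ?_
    · rintro u _ ⟨⟨⟨x, y⟩, h⟩, rfl⟩
      exact ⟨⟨σ u (x, y), hK u _ h⟩, rfl⟩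
    · intro h
      have : A.v ∈ LinearMap.range f1 := ⟨⟨w, hwK⟩, rfl⟩
      rw [h, Submodule.mem_bot] at this
      exact A.v_ne this
  have s2 : Function.Surjective f2 := by
    rw [← LinearMap.range_eq_top]
    refine (B.simple _ ?_).resolve_left ?_
    · rintro u _ ⟨⟨⟨x, y⟩, h⟩, rfl⟩
      exact ⟨⟨σ u (x, y), hK u _ h⟩, rfl⟩
    · intro h
      have : B.v ∈ LinearMap.range f2 := ⟨⟨w, hwK⟩, rfl⟩
      rw [h, Submodule.mem_bot] at this
      exact B.v_ne this
  let g1 := LinearEquiv.ofBijective f1 ⟨i1, s1⟩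
  let g2 := LinearEquiv.ofBijective f2 ⟨i2, s2⟩
  refine ⟨g1.symm.trans g2, fun u x => ?_⟩
  obtain ⟨k, rfl⟩ := g1.surjective x
  have e : A.ρ u (g1 k) = g1 ⟨σ u k, hK u _ k.2⟩ := rfl
  rw [e]
  simp only [LinearEquiv.trans_apply, LinearEquiv.symm_apply_apply]
  rfl

lemma aux_mkOp {α M : Type} [AddCommGroup M] [Module ℂ M] (g : α → M) (x : α) :
    mkOp g (Finsupp.single x 1) = g x := by
  simp [mkOp]

/-- coordinate of a tensor -/
abbrev auxΦ (m n : ℕ) (L : Type) [AddCommGroup L] [Module ℂ L] :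
    FaSp m n ⊗[ℂ] L ≃ₗ[ℂ] (FaMon m n →₀ L) := TensorProduct.finsuppScalarLeft ℂ L (FaMon m n)

lemma aux_ext {m n : ℕ} {L M : Type} [AddCommGroup L] [Module ℂ L] [AddCommGroup M] [Module ℂ M]
    {f g : FaSp m n ⊗[ℂ] L →ₗ[ℂ] M}
    (h : ∀ x v, f (amono x ⊗ₜ v) = g (amono x ⊗ₜ v)) : f = g := by
  refine TensorProduct.ext ?_
  ext x v
  exact h x v

lemma aux_coordE {m n : ℕ} {L : Type} [AddCommGroup L] [Module ℂ L] (i : Fin m)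
    (x : FaMon m n) (z : FaSp m n ⊗[ℂ] L) :
    auxΦ m n L ((aParE i).rTensor L z) x =
      ((x.1 i : ℂ) + 1) • auxΦ m n L z (Function.update x.1 i (x.1 i + 1), x.2) := by
  have : (Finsupp.lapply x : (FaMon m n →₀ L) →ₗ[ℂ] L) ∘ₗ (auxΦ m n L).toLinearMap ∘ₗ
        ((aParE i).rTensor L) = ((x.1 i : ℂ) + 1) •
      ((Finsupp.lapply (Function.update x.1 i (x.1 i + 1), x.2) : (FaMon m n →₀ L) →ₗ[ℂ] L) ∘ₗ
        (auxΦ m n L).toLinearMap) := by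
    apply aux_ext
    intro y v
    simp only [LinearMap.comp_apply, LinearMap.rTensor_tmul, LinearEquiv.coe_coe,
      LinearMap.smul_apply, Finsupp.lapply_apply, TensorProduct.finsuppScalarLeft_apply_tmul_apply,
      aParE, amono, aux_mkOp, Finsupp.smul_apply, smul_smul]
    congr 1
    simp only [Finsupp.single_apply, smul_eq_mul]
    by_cases h : y = (Function.update x.1 i (x.1 i + 1), x.2)
    · subst h
      simp
    · rw [if_neg h]
      by_cases h2 : (Function.update y.1 i (y.1 i - 1), y.2) = x
      · rw [if_pos h2]
        subst h2
        by_cases h3 : y.1 i = 0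
        · simp [h3]
        · exfalso
          apply h
          have : y.1 i - 1 + 1 = y.1 i := by omega
          simp [this]
      · rw [if_neg h2]; simp
  exact congrArg (fun f => f z) this

lemma aux_coordO {m n : ℕ} {L : Type} [AddCommGroup L] [Module ℂ L] (i : Fin n)
    (x : FaMon m n) (z : FaSp m n ⊗[ℂ] L) :
    auxΦ m n L ((aParO i).rTensor L z) x =
      if x.2 i then 0 else
      ((-1 : ℂ) ^ (cntB (Function.update x.2 i true) i)) •
        auxΦ m n L z (x.1, Function.update x.2 i true) := by
  have : (Finsupp.lapply x : (FaMon m n →₀ L) →ₗ[ℂ] L) ∘ₗ (auxΦ m n L).toLinearMap ∘ₗ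
        ((aParO i).rTensor L) = (if x.2 i then 0 else
        ((-1 : ℂ) ^ (cntB (Function.update x.2 i true) i))) •
      ((Finsupp.lapply (x.1, Function.update x.2 i true) : (FaMon m n →₀ L) →ₗ[ℂ] L) ∘ₗ
        (auxΦ m n L).toLinearMap) := by
    apply aux_ext
    intro y v
    simp only [LinearMap.comp_apply, LinearMap.rTensor_tmul, LinearEquiv.coe_coe,
      LinearMap.smul_apply, Finsupp.lapply_apply, TensorProduct.finsuppScalarLeft_apply_tmul_apply,
      aParO, amono, aux_mkOp, smul_smul]
    congr 1
    by_cases h : y = (x.1, Function.update x.2 i true)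
    · subst h
      rcases hx : x.2 i with _ | _
      · have : Function.update x.2 i false = x.2 := by rw [← hx]; simp
        simp [this]
      · have : Function.update x.2 i false ≠ x.2 := by
          intro h; have := congrFun h i; simp [hx] at this
        simp [Prod.ext_iff, this]
    · rw [Finsupp.single_apply, if_neg h, mul_zero]
      split_ifs with h1
      · rw [Finsupp.smul_apply, Finsupp.single_apply, if_neg, smul_zero]
        intro h2
        apply h
        subst h2
        have : Function.update y.2 i true = y.2 := by rw [← h1]; simp
        simp [this]
      · simp
  have h2 := congrArg (fun f => f z) this
  refine Eq.trans h2 ?_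
  simp only [LinearMap.smul_apply]
  split_ifs
  · simp
  · rfl

/-- total degree -/
def auxDeg {m n : ℕ} (x : FaMon m n) : ℕ := (∑ i, x.1 i) + cntA x.2

lemma auxDegE {m n : ℕ} (x : FaMon m n) (i : Fin m) :
    auxDeg (Function.update x.1 i (x.1 i + 1), x.2) = auxDeg x + 1 := by
  have : ∑ j, Function.update x.1 i (x.1 i + 1) j = ∑ j, x.1 j + 1 := by
    rw [Finset.sum_update_of_mem (Finset.mem_univ i),
      ← Finset.add_sum_erase Finset.univ x.1 (Finset.mem_univ i), Finset.sdiff_singleton_eq_erase]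
    omega
  simp only [auxDeg, this]
  omega

lemma auxDegO {m n : ℕ} (x : FaMon m n) (i : Fin n) (h : x.2 i = false) :
    auxDeg (x.1, Function.update x.2 i true) = auxDeg x + 1 := by
  have : (Finset.univ.filter fun j => Function.update x.2 i true j = true) =
      insert i (Finset.univ.filter fun j => x.2 j = true) := by
    ext j
    by_cases hj : j = i
    · subst hj; simp
    · simp [hj]
  simp only [auxDeg, cntA, this]
  rw [Finset.card_insert_of_notMem (by simp [h])]
  omega

lemma aux_reach {m n : ℕ} {L : Type} [AddCommGroup L] [Module ℂ L]
    (N : Submodule ℂ (FaSp m n ⊗[ℂ] L))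
    (hE : ∀ i, ∀ z ∈ N, (aParE i).rTensor L z ∈ N)
    (hO : ∀ i, ∀ z ∈ N, (aParO i).rTensor L z ∈ N) (d : ℕ) :
    ∀ z ∈ N, z ≠ 0 → (∀ x, auxΦ m n L z x ≠ 0 → auxDeg x < d) →
      ∃ v : L, v ≠ 0 ∧ amono (hwMon m n) ⊗ₜ[ℂ] v ∈ N := by
  induction d with
  | zero =>
    intro z _ h0 hd
    exfalso
    apply h0
    apply (auxΦ m n L).injective
    rw [map_zero]
    ext x
    by_contra h
    exact absurd (hd x h) (by omega)
  | succ d ih =>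
    intro z hz h0 hd
    by_cases h1 : ∃ i, (aParE i).rTensor L z ≠ 0
    · obtain ⟨i, hi⟩ := h1
      refine ih _ (hE i z hz) hi fun x hx => ?_
      rw [aux_coordE] at hx
      have := hd _ (right_ne_zero_of_smul hx)
      rw [auxDegE] at this
      omega
    by_cases h2 : ∃ i, (aParO i).rTensor L z ≠ 0
    · obtain ⟨i, hi⟩ := h2
      refine ih _ (hO i z hz) hi fun x hx => ?_
      rw [aux_coordO] at hx
      split_ifs at hx with hxi
      · exact absurd rfl hx
      · have := hd _ (right_ne_zero_of_smul hx)
        rw [auxDegO _ _ (by simpa using hxi)] at this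
        omega
    push Not at h1 h2
    have hs : ∀ y, y ≠ hwMon m n → auxΦ m n L z y = 0 := by
      intro y hy
      by_cases h3 : ∃ i, y.1 i ≠ 0
      · obtain ⟨i, hi⟩ := h3
        have := aux_coordE i (Function.update y.1 i (y.1 i - 1), y.2) z
        rw [h1 i] at this
        have e : y.1 i - 1 + 1 = y.1 i := by omega
        simp only [map_zero, Finsupp.coe_zero, Pi.zero_apply, Function.update_self,
          Function.update_idem, e, Function.update_eq_self] at this
        refine (smul_eq_zero.1 this.symm).resolve_left ?_
        exact Nat.cast_add_one_ne_zero (y.1 i - 1)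
      by_cases h4 : ∃ i, y.2 i = true
      · obtain ⟨i, hi⟩ := h4
        have := aux_coordO i (y.1, Function.update y.2 i false) z
        rw [h2 i] at this
        have e : Function.update y.2 i true = y.2 := by rw [← hi]; simp
        simp only [map_zero, Finsupp.coe_zero, Pi.zero_apply, Function.update_self,
          Function.update_idem, e, Bool.false_eq_true, if_false] at this
        refine (smul_eq_zero.1 this.symm).resolve_left ?_
        exact pow_ne_zero _ (by norm_num)
      · push Not at h3 h4
        exfalso
        apply hy
        refine Prod.ext (funext h3) (funext fun i => ?_)
        have := h4 i
        exact Bool.eq_false_of_not_eq_true this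
    have hz' : z = amono (hwMon m n) ⊗ₜ[ℂ] (auxΦ m n L z (hwMon m n)) := by
      apply (auxΦ m n L).injective
      ext y
      rw [TensorProduct.finsuppScalarLeft_apply_tmul_apply]
      by_cases hy : y = hwMon m n
      · subst hy; simp [amono]
      · rw [hs y hy, amono, Finsupp.single_apply, if_neg (Ne.symm hy), zero_smul]
    refine ⟨_, ?_, hz' ▸ hz⟩
    intro h
    rw [h, TensorProduct.tmul_zero] at hz'
    exact h0 hz'

lemma aux_par_hw {m n : ℕ} (a : ℂ) (d : Ind m n) :
    aParB a (emb d) (amono (hwMon m n)) = 0 := by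
  rcases d with d | d
  · change aParE d (Finsupp.single _ 1) = 0
    rw [aParE, aux_mkOp]; simp [hwMon]
  · change aParO d (Finsupp.single _ 1) = 0
    rw [aParO, aux_mkOp]; simp [hwMon]

lemma aux_ind_cases {m n : ℕ} (i : Ind (m+1) n) : i = z0 ∨ ∃ c : Ind m n, i = emb c := by
  rcases i with i | i
  · induction i using Fin.cases with
    | zero => exact Or.inl rfl
    | succ k => exact Or.inr ⟨Sum.inl k, rfl⟩
  · exact Or.inr ⟨Sum.inr i, rfl⟩

lemma aux_parM_hw (m n : ℕ) : parM (hwMon m n) = 0 := by simp [parM, hwMon, cntA]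

lemma aux_emb_lt {m n : ℕ} {c d : Ind m n} (h : iltI (emb c) (emb d)) : iltI c d := by
  rcases c with c | c <;> rcases d with d | d <;> simpa [iltI, emb] using h

lemma aux_ilt_irrefl {m n : ℕ} (c : Ind m n) : ¬ iltI c c := by
  rcases c with c | c <;> simp [iltI]

lemma aux_not_lt_z0 {m n : ℕ} (c : Ind (m+1) n) : ¬ iltI c z0 := by
  rcases c with c | c <;> simp [iltI, z0]

lemma aux_cancel {V : Type} [AddCommGroup V] [Module ℂ V] (N : Submodule ℂ V) (x y : V)
    (h : x + y ∈ N) (hy : y ∈ N) : x ∈ N := (Submodule.add_mem_iff_left N hy).1 h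

/-- Theorem 4.3.  `F_a ⊗ L(λ) ≅ L(λ̃)` as `gl(m+1|n)`-modules if and only if
`F_a ⊗ L(λ)` is generated by the highest weight vector `t_0^a ⊗ v_λ`. -/
theorem stmt7 (m n : ℕ) (a r : ℂ) (lam : Ind m n → ℂ) (HW : SimpleHW m n lam)
    (HW' : SimpleHW (m+1) n (lamTilde a r lam))
    (Θ : UEA (Ind (m+1) n) pI →ₐ[ℂ] Module.End ℂ (FaSp m n ⊗[ℂ] HW.L))
    (hΘ : IsTensorRep a r HW.ρ Θ) :
    (∃ g : (FaSp m n ⊗[ℂ] HW.L) ≃ₗ[ℂ] HW'.L,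
      ∀ (u : UEA (Ind (m+1) n) pI) (x : FaSp m n ⊗[ℂ] HW.L),
        g (Θ u x) = HW'.ρ u (g x)) ↔
    (∀ N : Submodule ℂ (FaSp m n ⊗[ℂ] HW.L),
      (∀ (u : UEA (Ind (m+1) n) pI), ∀ x ∈ N, Θ u x ∈ N) →
      amono (hwMon m n) ⊗ₜ[ℂ] HW.v ∈ N → N = ⊤) := by
  obtain ⟨h1, h2, h3, h4⟩ := hΘ
  have hne : amono (hwMon m n) ⊗ₜ[ℂ] HW.v ≠ 0 := by
    intro h
    have := congrArg (fun z => auxΦ m n HW.L z (hwMon m n)) h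
    simp [amono] at this
    exact HW.v_ne this
  constructor
  · rintro ⟨g, hg⟩ N hN hw
    have := HW'.simple (N.map g.toLinearMap) (by
      rintro u _ ⟨x, hx, rfl⟩
      exact ⟨Θ u x, hN u x hx, hg u x⟩)
    rcases this with h | h
    · exfalso
      have hm : g (amono (hwMon m n) ⊗ₜ[ℂ] HW.v) ∈ N.map g.toLinearMap := ⟨_, hw, rfl⟩
      rw [h, Submodule.mem_bot] at hm
      exact hne (g.map_eq_zero_iff.1 hm)
    · rw [eq_top_iff]
      intro x _
      have hm : g x ∈ N.map g.toLinearMap := by rw [h]; trivial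
      obtain ⟨y, hy, hxy⟩ := hm
      rwa [← g.injective hxy]
  · intro hgen
    have hcd : ∀ c d v, Θ (gen pI (emb c) (emb d)) (amono (hwMon m n) ⊗ₜ[ℂ] v) =
        amono (hwMon m n) ⊗ₜ[ℂ] (HW.ρ (gen pI c d) v) +
        (if c = d then (((-1 : ℂ) ^ (pI c * pI d)) * r) • (amono (hwMon m n) ⊗ₜ[ℂ] v) else 0) := by
      intro c d v
      rw [h1, aTD, Module.End.mul_apply, aux_par_hw, map_zero, TensorProduct.zero_tmul, zero_add,
        aux_parM_hw, mul_zero, pow_zero, one_smul]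
    have hpar : ∀ d, Θ (gen pI z0 (emb d)) = (aParB a (emb d)).rTensor HW.L := by
      intro d
      refine aux_ext (M := FaSp m n ⊗[ℂ] HW.L) (f := Θ (gen pI z0 (emb d))) ?_
      intro x v
      rw [h3]
      rfl
    let A : SimpleHW (m+1) n (lamTilde a r lam) :=
      { L := FaSp m n ⊗[ℂ] HW.L
        ρ := Θ
        v := amono (hwMon m n) ⊗ₜ[ℂ] HW.v
        v_ne := hne
        hw := by
          intro i j hij
          rcases aux_ind_cases j with rfl | ⟨d, rfl⟩
          · exact absurd hij (aux_not_lt_z0 _)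
          rcases aux_ind_cases i with rfl | ⟨c, rfl⟩
          · rw [hpar, LinearMap.rTensor_tmul, aux_par_hw, TensorProduct.zero_tmul]
          · have hcd' := aux_emb_lt hij
            have hne' : c ≠ d := by
              rintro rfl
              exact aux_ilt_irrefl _ hcd'
            rw [hcd, HW.hw c d hcd', if_neg hne', TensorProduct.tmul_zero, add_zero]
        hwt := by
          intro i
          rcases aux_ind_cases i with rfl | ⟨c, rfl⟩
          · rw [h4]
            have : (aTD a z0 z0) (amono (hwMon m n)) = a • amono (hwMon m n) := by
              change aPar0 a (Finsupp.single _ 1) = _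
              rw [aPar0, aux_mkOp]
              simp [hwMon, cntA]
            rw [this, ← TensorProduct.smul_tmul', ← add_smul]
            rfl
          · rw [hcd, if_pos rfl, HW.hwt, TensorProduct.tmul_smul, ← add_smul]
            congr 1
            rcases c with c | c
            · simp [pI, lamTilde, emb]
            · simp [pI, lamTilde, emb, sub_eq_add_neg]
        simple := by
          intro N hN
          by_cases hb : N = ⊥
          · exact Or.inl hb
          right
          obtain ⟨z, hz, hz0⟩ := (Submodule.ne_bot_iff N).1 hb
          obtain ⟨v, hv, hvN⟩ := aux_reach N
            (fun i z hz => by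
              have := hN (gen pI z0 (emb (Sum.inl i))) z hz
              rw [hpar] at this
              exact this)
            (fun i z hz => by
              have := hN (gen pI z0 (emb (Sum.inr i))) z hz
              rw [hpar] at this
              exact this)
            ((auxΦ m n HW.L z).support.sup auxDeg + 1) z hz hz0 (by
              intro x hx
              exact Nat.lt_succ_of_le (Finset.le_sup (f := auxDeg) (Finsupp.mem_support_iff.2 hx)))
          apply hgen N hN
          let S : Submodule ℂ HW.L := N.comap (TensorProduct.mk ℂ _ _ (amono (hwMon m n)))
          have hS : S = ⊤ := by
            refine (HW.simple S (aux_inv_of_gen HW.ρ S ?_)).resolve_left ?_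
            · intro c d x hx
              have hx' : amono (hwMon m n) ⊗ₜ[ℂ] x ∈ N := hx
              have := hN (gen pI (emb c) (emb d)) _ hx'
              rw [hcd] at this
              have h5 : (if c = d then (((-1 : ℂ) ^ (pI c * pI d)) * r) •
                  (amono (hwMon m n) ⊗ₜ[ℂ] x) else 0) ∈ N := by
                split_ifs
                · exact N.smul_mem _ hx'
                · exact zero_mem _
              exact aux_cancel (V := FaSp m n ⊗[ℂ] HW.L) N _ _ this h5
            · intro h
              have : v ∈ S := hvN
              rw [h, Submodule.mem_bot] at this
              exact hv this
          have : HW.v ∈ S := by rw [hS]; trivial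
          exact this }
    exact aux_unique A HW'
end
end
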